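/- arXiv:2505.15290 — 3 statements merged into one kernel-verified Lean document; each statement's English description precedes it below -/
import Mathlib

section
/- Fix a labelled Markov chain ⟨S, L, τ, ℓ⟩. Robust probabilistic bisimilarity ≃ is a robust bisimulation: it is a probabilistic bisimulation, and for every (s,t) with s ≃ t there exists a policy P ∈ P_τ such that ≃ supports a path from (s,t) to S²_Δ in ⟨S×S, P⟩. -/
open Finset Filter
open scoped Classical

/-- `μ` is a probability distribution on the finite type `X`. -/
def IsDist {X : Type*} [Fintype X] (μ : X → ℝ) : Prop :=
  (∀ x, 0 ≤ μ x) ∧ ∑ x, μ x = 1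

/-- `ω` is a coupling of the distributions `μ` and `ν`. -/
def IsCoupling {X : Type*} [Fintype X] (ω : X × X → ℝ) (μ ν : X → ℝ) : Prop :=
  IsDist ω ∧ (∀ x, ∑ y, ω (x, y) = μ x) ∧ (∀ x, ∑ y, ω (y, x) = ν x)

/-- Total variation distance: the maximum pointwise difference. -/
noncomputable def dTV {X : Type*} [Fintype X] (μ ν : X → ℝ) : ℝ :=
  ⨆ x, |μ x - ν x|

/-- The support of a (sub)distribution: points of positive probability. -/
def psupp {X : Type*} (μ : X → ℝ) : Set X := {x | 0 < μ x}

/-- Distance between functions into distributions. -/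
noncomputable def dF {A B : Type*} [Fintype B] (f g : A → B → ℝ) : ℝ :=
  ⨆ a, dTV (f a) (g a)

/-- `τ` is a transition probability function on `S`. -/
def IsTransFn {S : Type*} [Fintype S] (τ : S → S → ℝ) : Prop := ∀ s, IsDist (τ s)

/-- The diagonal `S²_Δ`. -/
def SDelta (S : Type*) : Set (S × S) := {p | p.1 = p.2}

/-- `P` is a policy for `τ` (with labelling `ℓ`). -/
def IsPolicy {S L : Type*} [Fintype S] (ℓ : S → L) (τ : S → S → ℝ)
    (P : S × S → S × S → ℝ) : Prop :=
  (∀ p, IsDist (P p)) ∧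
  (∀ p : S × S, ℓ p.1 = ℓ p.2 → IsCoupling (P p) (τ p.1) (τ p.2)) ∧
  (∀ p : S × S, ℓ p.1 ≠ ℓ p.2 → psupp (P p) = {p})

/-- A policy is `S²_Δ`-closed if the support of `P (s,s)` lies in the diagonal. -/
def DeltaClosed {S : Type*} (P : S × S → S × S → ℝ) : Prop :=
  ∀ s : S, psupp (P (s, s)) ⊆ SDelta S

/-- `d` is a `[0,1]`-valued function. -/
def Is01 {A : Type*} (d : A → ℝ) : Prop := ∀ a, 0 ≤ d a ∧ d a ≤ 1

/-- `d` is the least fixed point of `F` on the complete lattice of `[0,1]`-valued functions. -/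
def IsLfpOn {A : Type*} (F : (A → ℝ) → (A → ℝ)) (d : A → ℝ) : Prop :=
  Is01 d ∧ F d = d ∧ ∀ e, Is01 e → F e = e → ∀ a, d a ≤ e a

/-- The map `Γ_P` whose least fixed point is `γ_P`. -/
noncomputable def GammaF {S L : Type*} [Fintype S] (ℓ : S → L)
    (P : S × S → S × S → ℝ) (d : S × S → ℝ) : S × S → ℝ :=
  fun p => if ℓ p.1 ≠ ℓ p.2 then 1 else ∑ q, P p q * d q

/-- The map `Δ_τ` whose least fixed point is the probabilistic bisimilarity distance `δ_τ`. -/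
noncomputable def DeltaF {S L : Type*} [Fintype S] (ℓ : S → L)
    (τ : S → S → ℝ) (d : S × S → ℝ) : S × S → ℝ :=
  fun p => if ℓ p.1 ≠ ℓ p.2 then 1
    else sInf {r | ∃ ω, IsCoupling ω (τ p.1) (τ p.2) ∧ r = ∑ q, ω q * d q}

/-- The map whose least fixed point is `ρ_P`, the probability of reaching `S²_Δ`. -/
noncomputable def ReachF {S : Type*} [Fintype S]
    (P : S × S → S × S → ℝ) (e : S × S → ℝ) : S × S → ℝ :=
  fun p => if p.1 = p.2 then 1 else ∑ q, P p q * e q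

/-- States `s` and `t` are robustly probabilistically bisimilar. -/
def Robust {S L : Type*} [Fintype S] (ℓ : S → L) (τ : S → S → ℝ) (s t : S) : Prop :=
  ∃ P ρ, IsPolicy ℓ τ P ∧ IsLfpOn (ReachF P) ρ ∧ ρ (s, t) = 1

/-- `R` is a probabilistic bisimulation. -/
def IsBisim {S L : Type*} [Fintype S] (ℓ : S → L) (τ : S → S → ℝ)
    (R : Set (S × S)) : Prop :=
  Equivalence (fun s t => (s, t) ∈ R) ∧
  ∀ p ∈ R, ℓ p.1 = ℓ p.2 ∧ ∃ ω, IsCoupling ω (τ p.1) (τ p.2) ∧ psupp ω ⊆ R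

/-- Probabilistic bisimilarity `∼`. -/
def Bisimilar {S L : Type*} [Fintype S] (ℓ : S → L) (τ : S → S → ℝ) (s t : S) : Prop :=
  ∃ R, IsBisim ℓ τ R ∧ (s, t) ∈ R

/-- A step of a path in `⟨S×S, P⟩` supported by `R`. -/
def SupStep {S : Type*} (P : S × S → S × S → ℝ) (R : Set (S × S)) (a b : S × S) : Prop :=
  a ∈ R ∧ psupp (P a) ⊆ R ∧ 0 < P a b

/-- `R` supports a path from `p` to `S²_Δ` in `⟨S×S, P⟩`. -/
def SupportsPathToDelta {S : Type*} (P : S × S → S × S → ℝ) (R : Set (S × S))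
    (p : S × S) : Prop :=
  ∃ q : S × S, q.1 = q.2 ∧ Relation.ReflTransGen (SupStep P R) p q ∧
    q ∈ R ∧ psupp (P q) ⊆ R

/-- `R` is a robust bisimulation. -/
def IsRobustBisim {S L : Type*} [Fintype S] (ℓ : S → L) (τ : S → S → ℝ)
    (R : Set (S × S)) : Prop :=
  IsBisim ℓ τ R ∧ ∀ p ∈ R, ∃ P, IsPolicy ℓ τ P ∧ SupportsPathToDelta P R p

/-- The function `Filter` from the algorithm. -/
def FilterFn {S L : Type*} [Fintype S] (ℓ : S → L) (τ : S → S → ℝ)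
    (R : Set (S × S)) : Set (S × S) :=
  {p ∈ R | ∃ P, IsPolicy ℓ τ P ∧ SupportsPathToDelta P R p}

/-- The function `Prune` from the algorithm. -/
def PruneFn {S : Type*} (Q : Set (S × S)) : Set (S × S) :=
  {p ∈ Q | ∀ u : S, ((p.2, u) ∈ Q → (p.1, u) ∈ Q) ∧ ((u, p.1) ∈ Q → (u, p.2) ∈ Q)}

/-- `B` is the greatest probabilistic bisimulation contained in `Q` (i.e. `B = Bisim(Q)`). -/
def IsGreatestBisimIn {S L : Type*} [Fintype S] (ℓ : S → L) (τ : S → S → ℝ)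
    (Q B : Set (S × S)) : Prop :=
  IsBisim ℓ τ B ∧ B ⊆ Q ∧ ∀ B', IsBisim ℓ τ B' → B' ⊆ Q → B' ⊆ B

/-- Reachability in the Markov chain `⟨S×S, P⟩`. -/
def Reach {S : Type*} (P : S × S → S × S → ℝ) (p q : S × S) : Prop :=
  Relation.ReflTransGen (fun a b => 0 < P a b) p q

/-- `C` is a communication class of `⟨S×S, P⟩`. -/
def IsCommClass {S : Type*} (P : S × S → S × S → ℝ) (C : Set (S × S)) : Prop :=
  ∃ p, C = {q | Reach P p q ∧ Reach P q p}

/-- `C` is closed: no transition of positive probability leaves `C`. -/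
def IsClosedClass {S : Type*} (P : S × S → S × S → ℝ) (C : Set (S × S)) : Prop :=
  ∀ p ∈ C, psupp (P p) ⊆ C

/-!
Call a relation `W` robust-closed if it contains the diagonal and every pair in `W` reaches the
diagonal by steps that couplings supported in `W` can take. Robust bisimilarity is the greatest
robust-closed relation:

* Averaging couplings unites their supports, so a single policy can allow every step permitted by
  `W` without leaving `W`. The minimum over `W` of its reachability probability `ρ` is an average of
  `ρ` over successors in `W`, so it is propagated along any path in `W` to the diagonal, where
  `ρ = 1`.
* Conversely, if `ρ = 1` at an off-diagonal pair then `ρ = 1` at all its successors, and positive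
  `ρ` forces a path to the diagonal.

The inverse of a robust-closed relation is robust-closed, and gluing couplings shows the same for
compositions; hence robust bisimilarity is an equivalence relation.
-/

section Distributions

theorem psupp_single {X : Type*} [DecidableEq X] (x : X) : psupp (Pi.single x 1) = {x} := by
  ext y
  by_cases h : y = x <;> simp [psupp, h]

theorem psupp_midpoint {X : Type*} {f g : X → ℝ} (hf : 0 ≤ f) (hg : 0 ≤ g) :
    psupp (fun x => (f x + g x) / 2) = psupp f ∪ psupp g := by
  ext x
  have hfx : 0 ≤ f x := hf x
  have hgx : 0 ≤ g x := hg x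
  simp only [psupp, Set.mem_union, Set.mem_ofPred_eq]
  grind

variable {X : Type*} [Fintype X] {μ : X → ℝ}

theorem isDist_single [DecidableEq X] (x : X) : IsDist (Pi.single x 1) :=
  have hnonneg : (0 : X → ℝ) ≤ Pi.single x 1 := Pi.single_nonneg.2 zero_le_one
  ⟨hnonneg, by simp⟩

theorem IsDist.eq_of_forall_ge_of_sum_mul_eq (hμ : IsDist μ) {f : X → ℝ} {m : ℝ}
    (hm : ∀ x ∈ psupp μ, m ≤ f x) (h : ∑ x, μ x * f x = m) {x : X} (hx : x ∈ psupp μ) :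
    f x = m := by
  have hle : ∀ y ∈ univ, μ y * m ≤ μ y * f y := fun y _ => by
    rcases (hμ.1 y).eq_or_lt with h0 | hpos
    · simp [← h0]
    · exact mul_le_mul_of_nonneg_left (hm y hpos) hpos.le
  have hsum : ∑ y, μ y * m = ∑ y, μ y * f y := by rw [← sum_mul, hμ.2, one_mul, h]
  have hxm : μ x * m = μ x * f x := (sum_eq_sum_iff_of_le hle).1 hsum x (mem_univ x)
  exact (mul_left_cancel₀ (ne_of_gt hx) hxm).symm

theorem IsDist.eq_of_forall_le_of_sum_mul_eq (hμ : IsDist μ) {f : X → ℝ} {m : ℝ}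
    (hm : ∀ x ∈ psupp μ, f x ≤ m) (h : ∑ x, μ x * f x = m) {x : X} (hx : x ∈ psupp μ) :
    f x = m :=
  neg_injective <| hμ.eq_of_forall_ge_of_sum_mul_eq (f := -f)
    (fun y hy => neg_le_neg (hm y hy)) (by simp [h]) hx

end Distributions

section Couplings

variable {X : Type*} [Fintype X] {μ ν ξ : X → ℝ} {ω ω' : X × X → ℝ}

theorem IsDist.isCoupling_of_marginals (hμ : IsDist μ) (h0 : ∀ p, 0 ≤ ω p)
    (hl : ∀ x, ∑ y, ω (x, y) = μ x) (hr : ∀ y, ∑ x, ω (x, y) = ν y) : IsCoupling ω μ ν :=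
  ⟨⟨h0, by rw [Fintype.sum_prod_type, ← hμ.2]; exact sum_congr rfl fun x _ => hl x⟩, hl, hr⟩

theorem IsDist.isCoupling_mul (hμ : IsDist μ) (hν : IsDist ν) :
    IsCoupling (fun p => μ p.1 * ν p.2) μ ν :=
  hμ.isCoupling_of_marginals (fun p => mul_nonneg (hμ.1 p.1) (hν.1 p.2))
    (fun x => by simp only [← mul_sum, hν.2, mul_one])
    (fun y => by simp only [← sum_mul, hμ.2, one_mul])

theorem IsDist.exists_isCoupling_self (hμ : IsDist μ) :
    ∃ ω, IsCoupling ω μ μ ∧ psupp ω ⊆ SDelta X := by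
  refine ⟨fun p => if p.1 = p.2 then μ p.1 else 0,
    hμ.isCoupling_of_marginals (fun p => ?_) (fun x => by simp) (fun y => by simp), fun p hp => ?_⟩
  · split_ifs
    exacts [hμ.1 p.1, le_rfl]
  · by_contra hne
    exact absurd hp (by simp [psupp, show p.1 ≠ p.2 from hne])

namespace IsCoupling

theorem isDist_left (h : IsCoupling ω μ ν) : IsDist μ :=
  ⟨fun x => h.2.1 x ▸ sum_nonneg fun _ _ => h.1.1 _, by
    simp only [← h.2.1, ← h.1.2, Fintype.sum_prod_type]⟩

theorem isDist_right (h : IsCoupling ω μ ν) : IsDist ν :=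
  ⟨fun y => h.2.2 y ▸ sum_nonneg fun _ _ => h.1.1 _, by
    simp only [← h.2.2, ← h.1.2, Fintype.sum_prod_type_right]⟩

theorem le_left (h : IsCoupling ω μ ν) (x y : X) : ω (x, y) ≤ μ x :=
  h.2.1 x ▸ single_le_sum (f := fun y => ω (x, y)) (fun _ _ => h.1.1 _) (mem_univ y)

theorem le_right (h : IsCoupling ω μ ν) (x y : X) : ω (x, y) ≤ ν y :=
  h.2.2 y ▸ single_le_sum (f := fun x => ω (x, y)) (fun _ _ => h.1.1 _) (mem_univ x)

theorem exists_pos_of_left_pos (h : IsCoupling ω μ ν) {x : X} (hx : 0 < μ x) :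
    ∃ y, 0 < ω (x, y) := by
  rw [← h.2.1 x] at hx
  obtain ⟨y, -, hy⟩ := exists_lt_of_sum_lt (s := univ) (f := fun _ => (0 : ℝ)) (by simpa using hx)
  exact ⟨y, hy⟩

theorem swap (h : IsCoupling ω μ ν) : IsCoupling (ω ∘ Prod.swap) ν μ :=
  h.isDist_right.isCoupling_of_marginals (fun p => h.1.1 p.swap) h.2.2 h.2.1

theorem midpoint (h : IsCoupling ω μ ν) (h' : IsCoupling ω' μ ν) :
    IsCoupling (fun p => (ω p + ω' p) / 2) μ ν :=
  h.isDist_left.isCoupling_of_marginals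
    (fun p => div_nonneg (add_nonneg (h.1.1 p) (h'.1.1 p)) zero_le_two)
    (fun x => by rw [← sum_div, sum_add_distrib, h.2.1, h'.2.1, add_self_div_two])
    (fun y => by rw [← sum_div, sum_add_distrib, h.2.2, h'.2.2, add_self_div_two])

theorem exists_greatest_psupp (h : IsCoupling ω μ ν) {W : Set (X × X)} (hW : psupp ω ⊆ W) :
    ∃ ω₀, IsCoupling ω₀ μ ν ∧ psupp ω₀ ⊆ W ∧
      ∀ ω', IsCoupling ω' μ ν → psupp ω' ⊆ W → psupp ω' ⊆ psupp ω₀ := by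
  let C : Set (X × X → ℝ) := {ω | IsCoupling ω μ ν ∧ psupp ω ⊆ W}
  obtain ⟨_, ⟨ω₀, hω₀, rfl⟩, hmax⟩ :=
    (Set.toFinite (psupp '' C)).exists_maximal ⟨_, ω, ⟨h, hW⟩, rfl⟩
  refine ⟨ω₀, hω₀.1, hω₀.2, fun ω' h' hW' => ?_⟩
  have hsupp := psupp_midpoint hω₀.1.1.1 h'.1.1
  have hunion : psupp ω₀ ∪ psupp ω' ∈ psupp '' C := by
    rw [← hsupp]
    refine ⟨_, ⟨hω₀.1.midpoint h', ?_⟩, rfl⟩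
    rw [hsupp]
    exact Set.union_subset hω₀.2 hW'
  exact Set.subset_union_right.trans (hmax hunion Set.subset_union_left)

end IsCoupling

/-- The composition of a coupling `ω` of `μ` and `ν` with a coupling `ω'` of `ν` and `ξ`: the law of
`(x, z)` when `(x, y)` and `(y, z)` are drawn from `ω` and `ω'`, independently given `y`. Points `y`
with `ν y = 0` contribute `0`, as division by zero gives `0`. -/
noncomputable def gluing (ω : X × X → ℝ) (ν : X → ℝ) (ω' : X × X → ℝ) : X × X → ℝ :=
  fun p => ∑ y, ω (p.1, y) * ω' (y, p.2) / ν y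

namespace IsCoupling

theorem isCoupling_gluing (h : IsCoupling ω μ ν) (h' : IsCoupling ω' ν ξ) :
    IsCoupling (gluing ω ν ω') μ ξ := by
  refine h.isDist_left.isCoupling_of_marginals (fun p => ?_) (fun x => ?_) (fun z => ?_)
  · exact sum_nonneg fun y _ =>
      div_nonneg (mul_nonneg (h.1.1 _) (h'.1.1 _)) (h.isDist_right.1 y)
  · calc ∑ z, ∑ y, ω (x, y) * ω' (y, z) / ν y
        = ∑ y, ω (x, y) * ν y / ν y := by
          rw [sum_comm]
          simp only [← sum_div, ← mul_sum, h'.2.1]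
      _ = ∑ y, ω (x, y) := sum_congr rfl fun y _ => mul_div_cancel_of_imp fun hy =>
          le_antisymm (hy ▸ h.le_right x y) (h.1.1 _)
      _ = μ x := h.2.1 x
  · calc ∑ x, ∑ y, ω (x, y) * ω' (y, z) / ν y
        = ∑ y, ν y * ω' (y, z) / ν y := by
          rw [sum_comm]
          simp only [← sum_div, ← sum_mul, h.2.2]
      _ = ∑ y, ω' (y, z) := sum_congr rfl fun y _ => mul_div_cancel_left_of_imp fun hy =>
          le_antisymm (hy ▸ h'.le_left y z) (h'.1.1 _)
      _ = ξ z := h'.2.2 z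

theorem psupp_gluing (h : IsCoupling ω μ ν) (h' : IsCoupling ω' ν ξ) :
    psupp (gluing ω ν ω') = SetRel.comp (psupp ω) (psupp ω') := by
  have hnonneg : ∀ x y z, 0 ≤ ω (x, y) * ω' (y, z) / ν y := fun x y z =>
    div_nonneg (mul_nonneg (h.1.1 _) (h'.1.1 _)) (h.isDist_right.1 y)
  ext ⟨x, z⟩
  change (0 < ∑ y, ω (x, y) * ω' (y, z) / ν y) ↔ ∃ y, 0 < ω (x, y) ∧ 0 < ω' (y, z)
  rw [sum_pos_iff_of_nonneg fun y _ => hnonneg x y z]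
  refine ⟨fun ⟨y, _, hy⟩ => ⟨y, ?_, ?_⟩, fun ⟨y, hxy, hyz⟩ => ⟨y, mem_univ y, ?_⟩⟩
  · exact (h.1.1 _).lt_of_ne' fun h0 => by simp [h0] at hy
  · exact (h'.1.1 _).lt_of_ne' fun h0 => by simp [h0] at hy
  · exact div_pos (mul_pos hxy hyz) (hxy.trans_le (h.le_right x y))

end IsCoupling

end Couplings

section LeastFixedPoint

variable {A : Type*} {F : (A → ℝ) → (A → ℝ)}

theorem exists_fixedPoint_le_of_map_le (hmono : Monotone F) (h01 : ∀ d, Is01 d → Is01 (F d)) :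
    ∃ d, Is01 d ∧ F d = d ∧ ∀ e, Is01 e → F e ≤ e → d ≤ e := by
  let f : (A → Set.Icc (0 : ℝ) 1) →o (A → Set.Icc (0 : ℝ) 1) :=
    { toFun d a := ⟨F (fun b => d b) a, h01 _ (fun b => (d b).2) a⟩
      monotone' _ _ hde a := hmono (fun b => hde b) a }
  refine ⟨fun a => f.lfp a, fun a => (f.lfp a).2, ?_, fun e he hFe a => ?_⟩
  · exact funext fun a => congrArg Subtype.val (congrFun f.map_lfp a)
  · exact f.lfp_le (a := fun a => ⟨e a, he a⟩) hFe a

theorem exists_isLfpOn (hmono : Monotone F) (h01 : ∀ d, Is01 d → Is01 (F d)) :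
    ∃ d, IsLfpOn F d := by
  obtain ⟨d, hd, hFd, hle⟩ := exists_fixedPoint_le_of_map_le hmono h01
  exact ⟨d, hd, hFd, fun e he hFe => hle e he hFe.le⟩

theorem IsLfpOn.le_of_map_le {d e : A → ℝ} (hd : IsLfpOn F d) (hmono : Monotone F)
    (h01 : ∀ d, Is01 d → Is01 (F d)) (he : Is01 e) (hFe : F e ≤ e) : d ≤ e := by
  obtain ⟨d', hd', hFd', hle⟩ := exists_fixedPoint_le_of_map_le hmono h01
  exact le_trans (hd.2.2 d' hd' hFd') (hle e he hFe)

end LeastFixedPoint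

section ReachabilityProbability

variable {S : Type*} [Fintype S] {P : S × S → S × S → ℝ} {ρ : S × S → ℝ} {p q : S × S}

theorem monotone_reachF (hP : ∀ p, 0 ≤ P p) : Monotone (ReachF P) := by
  intro d e hde p
  unfold ReachF
  split_ifs
  · exact le_rfl
  · exact sum_le_sum fun q _ => mul_le_mul_of_nonneg_left (hde q) (hP p q)

theorem Is01.reachF (hP : ∀ p, IsDist (P p)) {d : S × S → ℝ} (hd : Is01 d) :
    Is01 (ReachF P d) := by
  intro p
  unfold ReachF
  split_ifs
  · exact ⟨zero_le_one, le_rfl⟩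
  · refine ⟨sum_nonneg fun q _ => mul_nonneg ((hP p).1 q) (hd q).1, ?_⟩
    rw [← (hP p).2]
    exact sum_le_sum fun q _ => mul_le_of_le_one_right ((hP p).1 q) (hd q).2

namespace IsLfpOn

theorem reachF_eq_one (hρ : IsLfpOn (ReachF P) ρ) (hp : p ∈ SDelta S) : ρ p = 1 := by
  rw [← hρ.2.1]
  exact if_pos hp

theorem reachF_eq_sum (hρ : IsLfpOn (ReachF P) ρ) (hp : p ∉ SDelta S) :
    ∑ q, P p q * ρ q = ρ p := by
  conv_rhs => rw [← hρ.2.1]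
  exact (if_neg hp).symm

theorem reachF_eq_one_of_step (hρ : IsLfpOn (ReachF P) ρ) (hP : IsDist (P p))
    (hp : p ∉ SDelta S) (h1 : ρ p = 1) (hpq : 0 < P p q) : ρ q = 1 :=
  hP.eq_of_forall_le_of_sum_mul_eq (fun r _ => (hρ.1 r).2) ((hρ.reachF_eq_sum hp).trans h1) hpq

theorem exists_reach_diag (hρ : IsLfpOn (ReachF P) ρ) (hP : ∀ p, IsDist (P p)) (hp : 0 < ρ p) :
    ∃ q ∈ SDelta S, Reach P p q := by
  let U : Set (S × S) := {p | ∃ q ∈ SDelta S, Reach P p q}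
  have hU01 : Is01 (U.indicator 1) := fun p => by
    by_cases h : p ∈ U <;> simp [h]
  have hU : ReachF P (U.indicator 1) ≤ U.indicator 1 := fun p => by
    by_cases hpU : p ∈ U
    · simpa [hpU] using (hU01.reachF hP p).2
    · have hsum : ∑ q, P p q * U.indicator 1 q = 0 := sum_eq_zero fun q _ => by
        rcases ((hP p).1 q).eq_or_lt with h0 | hpq
        · rw [← h0, zero_mul]
        · have hqU : q ∉ U := fun ⟨r, hr, hqr⟩ => hpU ⟨r, hr, .head hpq hqr⟩
          rw [Set.indicator_of_notMem hqU, mul_zero]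
      have hpΔ : p.1 ≠ p.2 := fun h => hpU ⟨p, h, .refl⟩
      simp [ReachF, hpΔ, hsum, hpU]
  have hle := hρ.le_of_map_le (monotone_reachF fun p => (hP p).1) (fun _ h => h.reachF hP) hU01 hU p
  by_contra hpU
  exact hp.not_ge (hle.trans_eq (Set.indicator_of_notMem (s := U) hpU 1))

theorem reachF_eq_one_of_supportsPathToDelta (hρ : IsLfpOn (ReachF P) ρ)
    (hP : ∀ p, IsDist (P p)) {W : Set (S × S)} (hW : ∀ p ∈ W, SupportsPathToDelta P W p)
    (hp : p ∈ W) : ρ p = 1 := by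
  obtain ⟨p₀, hp₀, hmin⟩ := Set.exists_min_image W ρ W.toFinite ⟨p, hp⟩
  obtain ⟨q, hq, hpath, -⟩ := hW p₀ hp₀
  suffices h : ∀ r, Relation.ReflTransGen (SupStep P W) r q → ρ r = ρ p₀ → ρ p₀ = 1 from
    le_antisymm (hρ.1 p).2 (h p₀ hpath rfl ▸ hmin p hp)
  intro r hrq
  induction hrq using Relation.ReflTransGen.head_induction_on with
  | refl => exact fun hqm => hqm ▸ hρ.reachF_eq_one hq
  | @head a b hab _ ih =>
    intro ham
    by_cases ha : a ∈ SDelta S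
    · exact ham ▸ hρ.reachF_eq_one ha
    · exact ih <| (hP a).eq_of_forall_ge_of_sum_mul_eq (fun c hc => hmin c (hab.2.1 hc))
        ((hρ.reachF_eq_sum ha).trans ham) hab.2.2

end IsLfpOn

end ReachabilityProbability

section RobustClosed

variable {S L : Type*} [Fintype S] {ℓ : S → L} {τ : S → S → ℝ} {V W : Set (S × S)} {p q : S × S}

/-- `CouplingStep ℓ τ W p q`: some policy keeps the successors of `p` in `W` and gives `q` positive
probability. Only the value of the policy at `p` matters, and it is a coupling. Pairs with different
labels, where every policy stays put, are given no step. -/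
def CouplingStep (ℓ : S → L) (τ : S → S → ℝ) (W : Set (S × S)) (p q : S × S) : Prop :=
  ℓ p.1 = ℓ p.2 ∧ ∃ ω, IsCoupling ω (τ p.1) (τ p.2) ∧ psupp ω ⊆ W ∧ 0 < ω q

/-- The pairs from which coupling steps in `W` lead to the diagonal. The policy may vary from step
to step. -/
def diagReach (ℓ : S → L) (τ : S → S → ℝ) (W : Set (S × S)) : Set (S × S) :=
  {p | ∃ q ∈ SDelta S, Relation.ReflTransGen (CouplingStep ℓ τ W) p q}

/-- Robust-closed relations: the reflexive post-fixed points of `diagReach`. Robust bisimilarity is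
the greatest one. -/
structure IsRobustClosed (ℓ : S → L) (τ : S → S → ℝ) (W : Set (S × S)) : Prop where
  diag_subset : SDelta S ⊆ W
  subset_diagReach : W ⊆ diagReach ℓ τ W

theorem CouplingStep.mono (hVW : V ⊆ W) (h : CouplingStep ℓ τ V p q) : CouplingStep ℓ τ W p q :=
  let ⟨hℓ, ω, hω, hωV, hq⟩ := h
  ⟨hℓ, ω, hω, hωV.trans hVW, hq⟩

theorem CouplingStep.swap (h : CouplingStep ℓ τ W p q) :
    CouplingStep ℓ τ (SetRel.inv W) p.swap q.swap :=
  let ⟨hℓ, ω, hω, hωW, hq⟩ := h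
  ⟨hℓ.symm, ω ∘ Prod.swap, hω.swap, fun _ hr => hωW hr, by simpa using hq⟩

theorem diag_subset_diagReach : SDelta S ⊆ diagReach ℓ τ W :=
  fun p hp => ⟨p, hp, .refl⟩

theorem diagReach_mono (hVW : V ⊆ W) : diagReach ℓ τ V ⊆ diagReach ℓ τ W :=
  fun _ ⟨q, hq, hpath⟩ =>
    ⟨q, hq, Relation.ReflTransGen.mono (fun _ _ => CouplingStep.mono hVW) _ _ hpath⟩

theorem CouplingStep.mem_diagReach (h : CouplingStep ℓ τ W p q) (hq : q ∈ diagReach ℓ τ W) :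
    p ∈ diagReach ℓ τ W :=
  let ⟨r, hr, hqr⟩ := hq
  ⟨r, hr, .head h hqr⟩

theorem swap_mem_diagReach_inv (hp : p ∈ diagReach ℓ τ W) :
    p.swap ∈ diagReach ℓ τ (SetRel.inv W) :=
  let ⟨q, hq, hpath⟩ := hp
  ⟨q.swap, hq.symm, hpath.lift Prod.swap fun _ _ => CouplingStep.swap⟩

theorem exists_isPolicy (ℓ : S → L) (hτ : IsTransFn τ) : ∃ P, IsPolicy ℓ τ P := by
  refine ⟨fun p => if ℓ p.1 = ℓ p.2 then fun q => τ p.1 q.1 * τ p.2 q.2 else Pi.single p 1,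
    fun p => ?_, fun p hp => ?_, fun p hp => ?_⟩
  · dsimp only
    split_ifs
    exacts [((hτ p.1).isCoupling_mul (hτ p.2)).1, isDist_single p]
  · simp only [if_pos hp]
    exact (hτ p.1).isCoupling_mul (hτ p.2)
  · simp only [if_neg hp]
    exact psupp_single p

theorem exists_isPolicy_of_couplingStep (hτ : IsTransFn τ)
    (hW : ∀ p ∈ W, ℓ p.1 = ℓ p.2 ∧ ∃ ω, IsCoupling ω (τ p.1) (τ p.2) ∧ psupp ω ⊆ W) :
    ∃ P, IsPolicy ℓ τ P ∧
      ∀ p ∈ W, psupp (P p) ⊆ W ∧ ∀ q, CouplingStep ℓ τ W p q → 0 < P p q := by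
  obtain ⟨P₀, hdist, hcoup, hstay⟩ := exists_isPolicy ℓ hτ
  have hgreatest : ∀ p ∈ W, ∃ ω₀, IsCoupling ω₀ (τ p.1) (τ p.2) ∧ psupp ω₀ ⊆ W ∧
      ∀ ω, IsCoupling ω (τ p.1) (τ p.2) → psupp ω ⊆ W → psupp ω ⊆ psupp ω₀ := fun p hp =>
    let ⟨_, _, hω, hωW⟩ := hW p hp
    hω.exists_greatest_psupp hωW
  choose! Ω hΩ hΩW hΩmax using hgreatest
  refine ⟨fun p => if p ∈ W then Ω p else P₀ p,
    ⟨fun p => ?_, fun p hp => ?_, fun p hp => ?_⟩, fun p hpW => ?_⟩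
  · dsimp only
    split_ifs with hpW
    exacts [(hΩ p hpW).1, hdist p]
  · dsimp only
    split_ifs with hpW
    exacts [hΩ p hpW, hcoup p hp]
  · simp only [if_neg fun hpW => hp (hW p hpW).1]
    exact hstay p hp
  · simp only [if_pos hpW]
    exact ⟨hΩW p hpW, fun q ⟨_, ω, hω, hωW, hq⟩ => hΩmax p hpW ω hω hωW hq⟩

namespace IsRobustClosed

theorem exists_isCoupling_of_mem (hW : IsRobustClosed ℓ τ W) (hτ : IsTransFn τ) (hp : p ∈ W) :
    ℓ p.1 = ℓ p.2 ∧ ∃ ω, IsCoupling ω (τ p.1) (τ p.2) ∧ psupp ω ⊆ W := by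
  obtain ⟨q, hq, hpath⟩ := hW.subset_diagReach hp
  rcases hpath.cases_head with rfl | ⟨_, ⟨hℓ, ω, hω, hωW, -⟩, -⟩
  · obtain ⟨ω, hω, hωΔ⟩ := (hτ p.1).exists_isCoupling_self
    have hp12 : p.1 = p.2 := hq
    exact ⟨congrArg ℓ hp12, ω, hp12 ▸ hω, hωΔ.trans hW.diag_subset⟩
  · exact ⟨hℓ, ω, hω, hωW⟩

theorem exists_isPolicy_supportsPathToDelta (hW : IsRobustClosed ℓ τ W) (hτ : IsTransFn τ) :
    ∃ P, IsPolicy ℓ τ P ∧ ∀ p ∈ W, SupportsPathToDelta P W p := by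
  obtain ⟨P, hP, hPW⟩ :=
    exists_isPolicy_of_couplingStep hτ fun p hp => hW.exists_isCoupling_of_mem hτ hp
  refine ⟨P, hP, fun p hp => ?_⟩
  obtain ⟨q, hq, hpath⟩ := hW.subset_diagReach hp
  induction hpath using Relation.ReflTransGen.head_induction_on with
  | refl => exact ⟨q, hq, .refl, hp, (hPW q hp).1⟩
  | head hab _ ih =>
    have hpos := (hPW _ hp).2 _ hab
    obtain ⟨r, hr, hbr, hrW⟩ := ih ((hPW _ hp).1 hpos)
    exact ⟨r, hr, .head ⟨hp, (hPW _ hp).1, hpos⟩ hbr, hrW⟩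

theorem robust_of_mem (hW : IsRobustClosed ℓ τ W) (hτ : IsTransFn τ) (hp : p ∈ W) :
    Robust ℓ τ p.1 p.2 := by
  obtain ⟨P, hP, hPW⟩ := hW.exists_isPolicy_supportsPathToDelta hτ
  obtain ⟨ρ, hρ⟩ := exists_isLfpOn (monotone_reachF fun p => (hP.1 p).1) fun _ h => h.reachF hP.1
  exact ⟨P, ρ, hP, hρ, hρ.reachF_eq_one_of_supportsPathToDelta hP.1 hPW hp⟩

theorem diag : IsRobustClosed ℓ τ (SDelta S) :=
  ⟨le_rfl, diag_subset_diagReach⟩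

theorem inv (hW : IsRobustClosed ℓ τ W) : IsRobustClosed ℓ τ (SetRel.inv W) :=
  ⟨fun _ hp => hW.diag_subset hp.symm,
    fun _ hp => swap_mem_diagReach_inv (hW.subset_diagReach hp)⟩

-- While the first pair moves to the diagonal, the glued couplings keep the second one in `W`; once
-- the first pair is diagonal, the composite pair lies in `W`, which leads to the diagonal.
theorem mem_diagReach_comp (hW : IsRobustClosed ℓ τ W) (hτ : IsTransFn τ) (hV : SDelta S ⊆ V)
    (hp : p ∈ diagReach ℓ τ V) {u : S} (hu : (p.2, u) ∈ W) :
    (p.1, u) ∈ diagReach ℓ τ (SetRel.comp V W) := by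
  obtain ⟨q, hq, hpath⟩ := hp
  induction hpath using Relation.ReflTransGen.head_induction_on generalizing u with
  | refl =>
    have hWVW : W ⊆ SetRel.comp V W := fun r hr => ⟨r.1, hV rfl, hr⟩
    have hq12 : q.1 = q.2 := hq
    exact diagReach_mono hWVW (hW.subset_diagReach (hq12 ▸ hu))
  | @head a b hab _ ih =>
    obtain ⟨hℓ, ω, hω, hωV, hb⟩ := hab
    obtain ⟨hℓ', ω', hω', hωW⟩ := hW.exists_isCoupling_of_mem hτ hu
    obtain ⟨v, hv⟩ := hω'.exists_pos_of_left_pos (hb.trans_le (hω.le_right b.1 b.2))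
    have hstep : CouplingStep ℓ τ (SetRel.comp V W) (a.1, u) (b.1, v) := by
      refine ⟨hℓ.trans hℓ', _, hω.isCoupling_gluing hω', ?_, ?_⟩
      · rw [hω.psupp_gluing hω']
        exact SetRel.comp_subset_comp hωV hωW
      · exact (hω.psupp_gluing hω').ge ⟨b.2, hb, hv⟩
    exact hstep.mem_diagReach (ih (hωW hv))

theorem comp (hV : IsRobustClosed ℓ τ V) (hW : IsRobustClosed ℓ τ W) (hτ : IsTransFn τ) :
    IsRobustClosed ℓ τ (SetRel.comp V W) where
  diag_subset p hp := ⟨p.1, hV.diag_subset rfl, hW.diag_subset hp⟩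
  subset_diagReach := fun _ ⟨_, hpV, hpW⟩ =>
    hW.mem_diagReach_comp hτ hV.diag_subset (hV.subset_diagReach hpV) hpW

end IsRobustClosed

theorem Robust.mem_diagReach (h : Robust ℓ τ p.1 p.2) :
    p ∈ diagReach ℓ τ {p | Robust ℓ τ p.1 p.2} := by
  obtain ⟨P, ρ, hP, hρ, h1⟩ := h
  replace h1 : ρ p = 1 := h1
  obtain ⟨q, hq, hpath⟩ := hρ.exists_reach_diag hP.1 (h1 ▸ zero_lt_one)
  induction hpath using Relation.ReflTransGen.head_induction_on with
  | refl => exact diag_subset_diagReach hq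
  | @head a b hab _ ih =>
    by_cases ha : a ∈ SDelta S
    · exact diag_subset_diagReach ha
    have hsucc : ∀ c, 0 < P a c → ρ c = 1 := fun c => hρ.reachF_eq_one_of_step (hP.1 a) ha h1
    have hb := ih (hsucc b hab)
    by_cases hℓ : ℓ a.1 = ℓ a.2
    · have hstep : CouplingStep ℓ τ {p | Robust ℓ τ p.1 p.2} a b :=
        ⟨hℓ, P a, hP.2.1 a hℓ, fun c hc => ⟨P, ρ, hP, hρ, hsucc c hc⟩, hab⟩
      exact hstep.mem_diagReach hb
    · have hba : b = a := (hP.2.2 a hℓ).le hab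
      exact hba ▸ hb

theorem isRobustClosed_robust (hτ : IsTransFn τ) :
    IsRobustClosed ℓ τ {p | Robust ℓ τ p.1 p.2} :=
  ⟨fun _ hp => IsRobustClosed.diag.robust_of_mem hτ hp, fun _ hp => hp.mem_diagReach⟩

end RobustClosed

/-- Proposition 9: robust probabilistic bisimilarity `≃` is a robust bisimulation. -/
theorem robust_is_robust_bisimulation {S L : Type*} [Fintype S] [Nonempty S] [Fintype L]
    (ℓ : S → L) (hℓ : ∃ a b : S, ℓ a ≠ ℓ b)
    (τ : S → S → ℝ) (hτ : IsTransFn τ) :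
    IsRobustBisim ℓ τ {p : S × S | Robust ℓ τ p.1 p.2} := by
  have hR : IsRobustClosed ℓ τ {p : S × S | Robust ℓ τ p.1 p.2} := isRobustClosed_robust hτ
  have hequiv : Equivalence (Robust ℓ τ) :=
    { refl := fun s => hR.diag_subset (show (s, s) ∈ SDelta S from rfl)
      symm := fun {s t} hst => hR.inv.robust_of_mem hτ (p := (t, s)) hst
      trans := fun {s t u} hst htu => (hR.comp hR hτ).robust_of_mem hτ (p := (s, u)) ⟨t, hst, htu⟩ }
  obtain ⟨P, hP, hpath⟩ := hR.exists_isPolicy_supportsPathToDelta hτ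
  exact ⟨⟨hequiv, fun p hp => hR.exists_isCoupling_of_mem hτ hp⟩, fun p hp => ⟨P, hP, hpath p hp⟩⟩
end

section
/- Fix a labelled Markov chain ⟨S, L, τ, ℓ⟩. (a) The function Filter is monotone with respect to set inclusion: for all probabilistic bisimulations R ⊆ R' with S²_Δ ⊆ R and R' ⊆ ∼, Filter(R) ⊆ Filter(R'). (b) The function Prune is not monotone: there exist a finite set S and reflexive symmetric relations A ⊆ B ⊆ S×S such that Prune(A) is not a subset of Prune(B). -/
open Finset Filter
open scoped Classical

/-! A policy and a path supported by `R` are supported by every larger relation, because `R` enters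
only through membership and inclusion of supports; hence `Filter` is monotone. `Prune` fixes every
transitive relation, and enlarging such a relation may destroy transitivity: relating `x` to `y`
gives an equivalence relation, but once `y` is also related to a third point `z` to which `x` is
not, `Prune` removes `(x, y)`. -/

section FilterFn

variable {S L : Type*} {R R' : Set (S × S)} {P : S × S → S × S → ℝ} {p q : S × S}

theorem SupStep.mono (hR : R ⊆ R') (h : SupStep P R p q) : SupStep P R' p q :=
  ⟨hR h.1, h.2.1.trans hR, h.2.2⟩

theorem SupportsPathToDelta.mono (hR : R ⊆ R') :
    SupportsPathToDelta P R p → SupportsPathToDelta P R' p :=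
  fun ⟨q, hq, hpath, hqR, hsupp⟩ ↦
    ⟨q, hq, Relation.ReflTransGen.mono (fun _ _ ↦ SupStep.mono hR) _ _ hpath, hR hqR,
      hsupp.trans hR⟩

theorem monotone_filterFn [Fintype S] (ℓ : S → L) (τ : S → S → ℝ) : Monotone (FilterFn ℓ τ) :=
  fun _ _ hR _ ⟨hp, P, hP, hpath⟩ ↦ ⟨hR hp, P, hP, hpath.mono hR⟩

end FilterFn

section PruneFn

variable {T : Type*} {x y z : T}

theorem pruneFn_eq_self (Q : SetRel T T) [Q.IsTrans] : PruneFn Q = Q :=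
  (Set.sep_subset _ _).antisymm fun _ hp ↦
    ⟨hp, fun _ ↦ ⟨fun hu ↦ Q.trans hp hu, fun hu ↦ Q.trans hu hp⟩⟩

theorem notMem_pruneFn {Q : Set (T × T)} (hyz : (y, z) ∈ Q) (hxz : (x, z) ∉ Q) :
    (x, y) ∉ PruneFn Q :=
  fun hxy ↦ hxz ((hxy.2 z).1 hyz)

/-- The relation `Q` with an undirected edge between `x` and `y` added; it is used to build the
relations on which `Prune` fails to be monotone. -/
def adjoinEdge (Q : SetRel T T) (x y : T) : SetRel T T :=
  Q ∪ {(x, y), (y, x)}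

theorem mk_mem_adjoinEdge {Q : SetRel T T} {a b : T} :
    (a, b) ∈ adjoinEdge Q x y ↔ (a, b) ∈ Q ∨ (a = x ∧ b = y) ∨ (a = y ∧ b = x) := by
  simp only [adjoinEdge, Set.mem_union, Set.mem_insert_iff, Set.mem_singleton_iff, Prod.mk.injEq]

theorem edge_mem_adjoinEdge (Q : SetRel T T) (x y : T) : (x, y) ∈ adjoinEdge Q x y :=
  .inr (.inl rfl)

theorem subset_adjoinEdge (Q : SetRel T T) (x y : T) : Q ⊆ adjoinEdge Q x y :=
  Set.subset_union_left

instance isRefl_adjoinEdge (Q : SetRel T T) [Q.IsRefl] (x y : T) : (adjoinEdge Q x y).IsRefl :=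
  SetRel.isRefl_mono (subset_adjoinEdge Q x y)

instance isSymm_adjoinEdge (Q : SetRel T T) [Q.IsSymm] (x y : T) : (adjoinEdge Q x y).IsSymm where
  symm a b := by
    rw [mk_mem_adjoinEdge, mk_mem_adjoinEdge, Q.comm]
    tauto

instance isTrans_adjoinEdge_id (x y : T) : (adjoinEdge SetRel.id x y).IsTrans where
  trans a b c := by
    simp only [mk_mem_adjoinEdge, SetRel.mem_id]
    grind

theorem not_pruneFn_subset_pruneFn_adjoinEdge {Q : SetRel T T} [Q.IsTrans] (hne : x ≠ y)
    (hxy : (x, y) ∈ Q) (hxz : (x, z) ∉ Q) : ¬ PruneFn Q ⊆ PruneFn (adjoinEdge Q y z) := by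
  rw [pruneFn_eq_self]
  have hxz' : (x, z) ∉ adjoinEdge Q y z := by
    rw [mk_mem_adjoinEdge]
    rintro (h | ⟨rfl, -⟩ | ⟨rfl, rfl⟩) <;> contradiction
  exact fun h ↦ notMem_pruneFn (edge_mem_adjoinEdge Q y z) hxz' (h hxy)

end PruneFn

theorem filter_monotone_prune_not_general {S L T : Type*} [Fintype S]
    (ℓ : S → L) (τ : S → S → ℝ) (_hτ : IsTransFn τ)
    {x y z : T} (hxy : x ≠ y) (hxz : x ≠ z) (hyz : y ≠ z) :
    Monotone (FilterFn ℓ τ) ∧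
    ∃ A B : Set (T × T),
      (∀ x : T, (x, x) ∈ A) ∧ (∀ p ∈ A, (p.2, p.1) ∈ A) ∧
      (∀ x : T, (x, x) ∈ B) ∧ (∀ p ∈ B, (p.2, p.1) ∈ B) ∧
      A ⊆ B ∧ ¬ PruneFn A ⊆ PruneFn B :=
  have : (SetRel.id : SetRel T T).IsRefl := SetRel.id_subset_iff.1 subset_rfl
  have hxz' : (x, z) ∉ adjoinEdge SetRel.id x y := by
    simp [mk_mem_adjoinEdge, hxy, hxz, hyz.symm]
  ⟨monotone_filterFn ℓ τ, adjoinEdge SetRel.id x y, adjoinEdge (adjoinEdge SetRel.id x y) y z,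
    SetRel.refl _, fun _ ↦ SetRel.symm _, SetRel.refl _, fun _ ↦ SetRel.symm _,
    subset_adjoinEdge _ y z,
    not_pruneFn_subset_pruneFn_adjoinEdge hxy (edge_mem_adjoinEdge _ x y) hxz'⟩

/-- Proposition 14: `Filter` is monotone with respect to `⊆`, but `Prune` is not. -/
theorem filter_monotone_prune_not {S L : Type*} [Fintype S] [Nonempty S] [Fintype L]
    (ℓ : S → L) (hℓ : ∃ a b : S, ℓ a ≠ ℓ b)
    (τ : S → S → ℝ) (hτ : IsTransFn τ) :
    (∀ R R' : Set (S × S), IsBisim ℓ τ R → IsBisim ℓ τ R' →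
      SDelta S ⊆ R → R ⊆ {p : S × S | Bisimilar ℓ τ p.1 p.2} →
      SDelta S ⊆ R' → R' ⊆ {p : S × S | Bisimilar ℓ τ p.1 p.2} →
      R ⊆ R' → FilterFn ℓ τ R ⊆ FilterFn ℓ τ R') ∧
    (∃ (T : Type) (_ : Fintype T) (A B : Set (T × T)),
      (∀ x : T, (x, x) ∈ A) ∧ (∀ p ∈ A, (p.2, p.1) ∈ A) ∧
      (∀ x : T, (x, x) ∈ B) ∧ (∀ p ∈ B, (p.2, p.1) ∈ B) ∧
      A ⊆ B ∧ ¬ PruneFn A ⊆ PruneFn B) :=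
  have ⟨hFilter, hPrune⟩ := filter_monotone_prune_not_general ℓ τ hτ
    (x := (0 : Fin 3)) (y := 1) (z := 2) (by decide) (by decide) (by decide)
  ⟨fun _ _ _ _ _ _ _ _ hR ↦ hFilter hR, Fin 3, inferInstance, hPrune⟩
end

section
/- Fix a labelled Markov chain ⟨S, L, τ, ℓ⟩. A probabilistic bisimulation R ⊆ S×S is a robust bisimulation if and only if R is a fixed point of Refine, i.e., Refine(R) = R. -/
open Finset Filter
open scoped Classical

/-! If `Q ⊆ R`, then `Bisim(Q) = R` exactly when `Q = R` and `R` is a probabilistic bisimulation, so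
a fixed point of `Refine` is a bisimulation that loses no pair under `Prune ∘ Filter`. As `Prune`
removes nothing from a transitive relation, this means losing no pair under `Filter`, which is the
reachability condition of robustness. -/

section Refine

variable {S L : Type*}

lemma pruneFn_subset (Q : Set (S × S)) : PruneFn Q ⊆ Q :=
  Set.sep_subset _ _

lemma pruneFn_eq_self_iff {Q : Set (S × S)} :
    PruneFn Q = Q ↔ ∀ s t u, (s, t) ∈ Q → (t, u) ∈ Q → (s, u) ∈ Q := by
  rw [PruneFn, Set.sep_eq_self_iff_mem_true]
  refine ⟨fun h s t u hst htu => (h (s, t) hst u).1 htu, ?_⟩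
  rintro trans ⟨s, t⟩ hst u
  exact ⟨fun htu => trans s t u hst htu, fun hus => trans u s t hus hst⟩

variable [Fintype S] {ℓ : S → L} {τ : S → S → ℝ} {Q R B : Set (S × S)}

lemma filterFn_subset : FilterFn ℓ τ R ⊆ R :=
  Set.sep_subset _ _

lemma filterFn_eq_self_iff :
    FilterFn ℓ τ R = R ↔ ∀ p ∈ R, ∃ P, IsPolicy ℓ τ P ∧ SupportsPathToDelta P R p :=
  Set.sep_eq_self_iff_mem_true

lemma isRobustBisim_iff_filterFn_eq_self :
    IsRobustBisim ℓ τ R ↔ IsBisim ℓ τ R ∧ FilterFn ℓ τ R = R := by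
  rw [IsRobustBisim, filterFn_eq_self_iff]

lemma pruneFn_filterFn_eq_self_iff (trans : ∀ s t u, (s, t) ∈ R → (t, u) ∈ R → (s, u) ∈ R) :
    PruneFn (FilterFn ℓ τ R) = R ↔ FilterFn ℓ τ R = R := by
  constructor
  · intro h
    exact filterFn_subset.antisymm (h.symm.subset.trans (pruneFn_subset _))
  · intro h
    rw [h, pruneFn_eq_self_iff.2 trans]

lemma IsGreatestBisimIn.eq_iff_of_subset (hB : IsGreatestBisimIn ℓ τ Q B) (hQR : Q ⊆ R) :
    B = R ↔ IsBisim ℓ τ R ∧ Q = R := by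
  obtain ⟨hB_bisim, hBQ, hB_greatest⟩ := hB
  constructor
  · rintro rfl
    exact ⟨hB_bisim, hQR.antisymm hBQ⟩
  · rintro ⟨hR_bisim, rfl⟩
    exact hBQ.antisymm (hB_greatest Q hR_bisim subset_rfl)

theorem robust_bisimulation_iff_fixed_point_general
    (hB : IsGreatestBisimIn ℓ τ (PruneFn (FilterFn ℓ τ R)) B) :
    IsRobustBisim ℓ τ R ↔ B = R := by
  have prune_filter_subset : PruneFn (FilterFn ℓ τ R) ⊆ R :=
    (pruneFn_subset _).trans filterFn_subset
  calc
    IsRobustBisim ℓ τ R ↔ IsBisim ℓ τ R ∧ FilterFn ℓ τ R = R := isRobustBisim_iff_filterFn_eq_self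
    _ ↔ IsBisim ℓ τ R ∧ PruneFn (FilterFn ℓ τ R) = R :=
      and_congr_right fun hR => (pruneFn_filterFn_eq_self_iff fun _ _ _ => hR.1.trans).symm
    _ ↔ B = R := (hB.eq_iff_of_subset prune_filter_subset).symm

end Refine

/-- Proposition 15: a probabilistic bisimulation `R` is a robust bisimulation iff it is a
fixed point of `Refine = Bisim ∘ Prune ∘ Filter`. -/
theorem robust_bisimulation_iff_fixed_point {S L : Type*} [Fintype S] [Nonempty S] [Fintype L]
    (ℓ : S → L) (hℓ : ∃ a b : S, ℓ a ≠ ℓ b)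
    (τ : S → S → ℝ) (hτ : IsTransFn τ)
    (R : Set (S × S)) (hR : IsBisim ℓ τ R)
    (B : Set (S × S)) (hB : IsGreatestBisimIn ℓ τ (PruneFn (FilterFn ℓ τ R)) B) :
    IsRobustBisim ℓ τ R ↔ B = R :=
  robust_bisimulation_iff_fixed_point_general hB
end
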